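/- arXiv:2105.05422 — 6 statements merged into one kernel-verified Lean document; each statement's English description precedes it below -/
import Mathlib

section
/- Let f : A ⥤ B and g : B ⥤ C be functors between small categories with g a discrete opfibration. If the composite g ∘ f carries a lens structure δ, then there is a unique lens structure φ on f such that composing the lens (f, φ) with the unique lens structure on g (in the sense of lens composition) yields the lens (g ∘ f, δ). -/
/-!
A lift along `f` of `u : f a ⟶ b` can only be the `δ`-lift of `g u`, because `γ` lifts `g u` to `u`.
This choice lies over `u`: its image under `f` has domain `f a` and is sent by `g` to `g u`, so it
is `u` by the uniqueness of lifts along `g`. The lens axioms are then inherited from `δ`.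
-/

open CategoryTheory

universe u

/-- A functor `F` is a discrete opfibration if for every object `a` of its domain and
every morphism `u : F.obj a ⟶ b` of its codomain, there exists a unique morphism `w`
with domain `a` such that `F.map w = u` (up to the identification of codomains). -/
def IsDiscreteOpfibration {A B : Type u} [SmallCategory A] [SmallCategory B]
    (F : A ⥤ B) : Prop :=
  ∀ ⦃a : A⦄ ⦃b : B⦄ (u : F.obj a ⟶ b),
    ∃! w : Σ a' : A, a ⟶ a', ∃ h : F.obj w.1 = b, F.map w.2 = u ≫ eqToHom h.symm

/-- A (delta) lens between small categories: a functor together with a lifting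
operation satisfying the three lens axioms. `lift u` packages the codomain
`a'` of the chosen lift together with the lift `a ⟶ a'` itself. -/
structure Lens (A B : Type u) [SmallCategory A] [SmallCategory B] where
  /-- the underlying (Get) functor -/
  func : A ⥤ B
  /-- the lifting (Put) operation -/
  lift : ∀ ⦃a : A⦄ ⦃b : B⦄, (func.obj a ⟶ b) → Σ a' : A, a ⟶ a'
  /-- the codomain of the lift lies over the codomain of the lifted morphism -/
  lift_cod : ∀ ⦃a : A⦄ ⦃b : B⦄ (u : func.obj a ⟶ b), func.obj (lift u).1 = b
  /-- axiom (1): `f (φ (a, u)) = u` -/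
  lift_map : ∀ ⦃a : A⦄ ⦃b : B⦄ (u : func.obj a ⟶ b),
      func.map (lift u).2 = u ≫ eqToHom (lift_cod u).symm
  /-- axiom (2): `φ (a, 1) = 1` -/
  lift_id : ∀ a : A, lift (𝟙 (func.obj a)) = ⟨a, 𝟙 a⟩
  /-- axiom (3): `φ (a, v ∘ u) = φ (a', v) ∘ φ (a, u)` -/
  lift_comp : ∀ ⦃a : A⦄ ⦃b c : B⦄ (u : func.obj a ⟶ b) (v : b ⟶ c),
      lift (u ≫ v) = ⟨(lift (eqToHom (lift_cod u) ≫ v)).1,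
        (lift u).2 ≫ (lift (eqToHom (lift_cod u) ≫ v)).2⟩

namespace Lens

variable {A B C : Type u} [SmallCategory A] [SmallCategory B] [SmallCategory C]

theorem lift_eqToHom (L : Lens A B) {a a' : A} (h : a' = a) {b : B}
    (u : L.func.obj a ⟶ b) (h' : L.func.obj a' = L.func.obj a) :
    L.lift (eqToHom h' ≫ u) = ⟨(L.lift u).1, eqToHom h ≫ (L.lift u).2⟩ := by
  subst h; simp

/-- The identity lens on a small category. -/
def id (A : Type u) [SmallCategory A] : Lens A A where
  func := Functor.id A
  lift _ b u := ⟨b, u⟩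
  lift_cod _ _ _ := rfl
  lift_map := by intros; simp
  lift_id := by intros; rfl
  lift_comp := by intros; simp

/-- Composition of lenses: `(L.comp M).lift u = L.lift ((M.lift u).2)`. -/
def comp (L : Lens A B) (M : Lens B C) : Lens A C where
  func := L.func ⋙ M.func
  lift _ _ u := L.lift (M.lift u).2
  lift_cod a c u := by
    show M.func.obj (L.func.obj _) = c
    rw [L.lift_cod]
    exact M.lift_cod u
  lift_map a c u := by
    show M.func.map (L.func.map _) = _
    rw [L.lift_map, Functor.map_comp, M.lift_map, eqToHom_map]
    simp
  lift_id a := by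
    show L.lift (M.lift (𝟙 (M.func.obj (L.func.obj a)))).2 = _
    rw [M.lift_id]
    exact L.lift_id a
  lift_comp a c c' u v := by
    show L.lift (M.lift (u ≫ v)).2 = _
    rw [M.lift_comp u v]
    show L.lift ((M.lift u).2 ≫ (M.lift (eqToHom (M.lift_cod u) ≫ v)).2) = _
    rw [L.lift_comp]
    have key : M.lift (eqToHom (show (L.func ⋙ M.func).obj (L.lift (M.lift u).2).1 = c by
          show M.func.obj (L.func.obj _) = c; rw [L.lift_cod]; exact M.lift_cod u) ≫ v)
        = ⟨(M.lift (eqToHom (M.lift_cod u) ≫ v)).1,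
            eqToHom (L.lift_cod (M.lift u).2) ≫ (M.lift (eqToHom (M.lift_cod u) ≫ v)).2⟩ := by
      rw [show (eqToHom (show (L.func ⋙ M.func).obj (L.lift (M.lift u).2).1 = c by
          show M.func.obj (L.func.obj _) = c; rw [L.lift_cod]; exact M.lift_cod u) ≫ v)
        = eqToHom (congrArg M.func.obj (L.lift_cod (M.lift u).2)) ≫ (eqToHom (M.lift_cod u) ≫ v) by
          rw [← Category.assoc, eqToHom_trans]]
      exact M.lift_eqToHom (L.lift_cod (M.lift u).2) _ _
    beta_reduce
    rw [key]

/-- A lens is a monomorphism in the category of small categories and lenses if it is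
left-cancellable with respect to lens composition. -/
def IsMono (f : Lens A B) : Prop :=
  ∀ ⦃D : Type u⦄ [SmallCategory D], ∀ x y : Lens D A, x.comp f = y.comp f → x = y

/-- A lens is an epimorphism in the category of small categories and lenses if it is
right-cancellable with respect to lens composition. -/
def IsEpi (f : Lens A B) : Prop :=
  ∀ ⦃C : Type u⦄ [SmallCategory C], ∀ x y : Lens B C, f.comp x = f.comp y → x = y

end Lens

namespace IsDiscreteOpfibration

variable {A B : Type u} [SmallCategory A] [SmallCategory B] {F : A ⥤ B}

theorem sigma_ext (hF : IsDiscreteOpfibration F) {a : A} {w w' : Σ a' : A, a ⟶ a'}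
    (hcod : F.obj w.1 = F.obj w'.1) (hmap : F.map w.2 = F.map w'.2 ≫ eqToHom hcod.symm) :
    w = w' :=
  (hF (F.map w'.2)).unique ⟨hcod, hmap⟩ ⟨rfl, by simp⟩

theorem exists_eq_comp_eqToHom (hF : IsDiscreteOpfibration F) {a b b' : A} {w : a ⟶ b'}
    {u : a ⟶ b} (hcod : F.obj b' = F.obj b) (hmap : F.map w = F.map u ≫ eqToHom hcod.symm) :
    ∃ h : b' = b, w = u ≫ eqToHom h.symm := by
  cases hF.sigma_ext (w := ⟨b', w⟩) (w' := ⟨b, u⟩) hcod hmap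
  exact ⟨rfl, by simp⟩

end IsDiscreteOpfibration

namespace Lens

section Lift

variable {A B : Type u} [SmallCategory A] [SmallCategory B]

theorem ext {L M : Lens A B} (hfunc : L.func = M.func)
    (hlift : ∀ ⦃a : A⦄ ⦃b : B⦄ (u : L.func.obj a ⟶ b),
      L.lift u = M.lift (eqToHom (Functor.congr_obj hfunc.symm a) ≫ u)) :
    L = M := by
  obtain ⟨F, liftL, _, _, _, _⟩ := L
  obtain ⟨G, liftM, _, _, _, _⟩ := M
  obtain rfl : F = G := hfunc
  obtain rfl : @liftL = @liftM := by
    funext a b u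
    simpa only [eqToHom_refl, Category.id_comp] using hlift u
  rfl

theorem congr_lift {L M : Lens A B} (h : L = M) {a : A} {b : B} (u : L.func.obj a ⟶ b) :
    L.lift u = M.lift (eqToHom (by rw [h]) ≫ u) := by
  subst h
  simp

theorem lift_of_eqToHom (L : Lens A B) {a : A} {b : B} (h : L.func.obj a = b) :
    L.lift (eqToHom h) = ⟨a, 𝟙 a⟩ := by
  subst h
  exact L.lift_id a

theorem lift_func_map {L : Lens A B} (hL : IsDiscreteOpfibration L.func)
    {a a' : A} (w : a ⟶ a') : L.lift (L.func.map w) = ⟨a', w⟩ :=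
  hL.sigma_ext (L.lift_cod _) (L.lift_map _)

end Lift

variable {A B C : Type u} [SmallCategory A] [SmallCategory B] [SmallCategory C]

theorem comp_lift_func_map (φ : Lens A B) {γ : Lens B C} (hγ : IsDiscreteOpfibration γ.func)
    {a : A} {b : B} (u : φ.func.obj a ⟶ b) :
    (φ.comp γ).lift (γ.func.map u) = φ.lift u :=
  congrArg (fun w : Σ b', φ.func.obj a ⟶ b' => φ.lift w.2) (lift_func_map hγ u)

theorem eq_of_comp_eq_comp {φ ψ : Lens A B} {γ : Lens B C}
    (hγ : IsDiscreteOpfibration γ.func) (hfunc : φ.func = ψ.func)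
    (hcomp : φ.comp γ = ψ.comp γ) : φ = ψ := by
  refine Lens.ext hfunc fun a b u => ?_
  have hψ : ψ.func.obj a = φ.func.obj a := Functor.congr_obj hfunc.symm a
  calc φ.lift u
      = (φ.comp γ).lift (γ.func.map u) := (φ.comp_lift_func_map hγ u).symm
    _ = (ψ.comp γ).lift (eqToHom (congrArg γ.func.obj hψ) ≫ γ.func.map u) :=
        congr_lift hcomp _
    _ = (ψ.comp γ).lift (γ.func.map (eqToHom hψ ≫ u)) := by
        rw [γ.func.map_comp, eqToHom_map]
        rfl
    _ = ψ.lift (eqToHom hψ ≫ u) := ψ.comp_lift_func_map hγ _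

section OfPostcomp

variable {f : A ⥤ B} {g : B ⥤ C} (δ : Lens A C) (hδ : δ.func = f ⋙ g)

/-- The lift, with respect to a lens `δ` on `f ⋙ g`, of the image under `g` of a morphism
`u : f.obj a ⟶ b`. As `δ.func` and `f ⋙ g` are only propositionally equal, `g.map u` is
transported along `eqToHom`. -/
def postcompLift {a : A} {b : B} (u : f.obj a ⟶ b) : Σ a' : A, a ⟶ a' :=
  δ.lift (eqToHom (Functor.congr_obj hδ a) ≫ g.map u)

theorem func_obj_postcompLift {a : A} {b : B} (u : f.obj a ⟶ b) :
    δ.func.obj (δ.postcompLift hδ u).1 = g.obj b :=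
  δ.lift_cod _

theorem func_map_postcompLift {a : A} {b : B} (u : f.obj a ⟶ b) :
    δ.func.map (δ.postcompLift hδ u).2 = (eqToHom (Functor.congr_obj hδ a) ≫ g.map u) ≫
      eqToHom (δ.func_obj_postcompLift hδ u).symm :=
  δ.lift_map _

theorem postcompLift_of_map_eq {a : A} {b : B} {c : C} {w : f.obj a ⟶ b}
    {u : g.obj (f.obj a) ⟶ c} (h : c = g.obj b) (hw : g.map w = u ≫ eqToHom h) :
    δ.postcompLift hδ w = δ.lift (eqToHom (Functor.congr_obj hδ a) ≫ u) := by
  subst h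
  simp [postcompLift, hw]

theorem postcompLift_eqToHom_comp {a : A} {b c : B} (h : f.obj a = b)
    (h' : δ.func.obj a = g.obj b) (v : b ⟶ c) :
    δ.postcompLift hδ (eqToHom h ≫ v) = δ.lift (eqToHom h' ≫ g.map v) := by
  subst h
  simp [postcompLift]

theorem postcompLift_id (a : A) : δ.postcompLift hδ (𝟙 (f.obj a)) = ⟨a, 𝟙 a⟩ := by
  simpa [postcompLift] using δ.lift_of_eqToHom (Functor.congr_obj hδ a)

theorem postcompLift_comp {a : A} {b c : B} (u : f.obj a ⟶ b) (v : b ⟶ c)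
    (h : f.obj (δ.postcompLift hδ u).1 = b) :
    δ.postcompLift hδ (u ≫ v) = ⟨(δ.postcompLift hδ (eqToHom h ≫ v)).1,
      (δ.postcompLift hδ u).2 ≫ (δ.postcompLift hδ (eqToHom h ≫ v)).2⟩ := by
  have hcod := δ.func_obj_postcompLift hδ u
  calc δ.postcompLift hδ (u ≫ v)
      = δ.lift ((eqToHom (Functor.congr_obj hδ a) ≫ g.map u) ≫ g.map v) := by
        simp [postcompLift]
    _ = ⟨(δ.lift (eqToHom hcod ≫ g.map v)).1,
          (δ.postcompLift hδ u).2 ≫ (δ.lift (eqToHom hcod ≫ g.map v)).2⟩ :=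
        δ.lift_comp _ _
    _ = _ := by rw [postcompLift_eqToHom_comp]

theorem exists_map_postcompLift_eq (hg : IsDiscreteOpfibration g) {a : A} {b : B}
    (u : f.obj a ⟶ b) :
    ∃ h : f.obj (δ.postcompLift hδ u).1 = b,
      f.map (δ.postcompLift hδ u).2 = u ≫ eqToHom h.symm := by
  have hcod : g.obj (f.obj (δ.postcompLift hδ u).1) = g.obj b :=
    (Functor.congr_obj hδ _).symm.trans (δ.func_obj_postcompLift hδ u)
  refine hg.exists_eq_comp_eqToHom hcod ?_
  calc g.map (f.map (δ.postcompLift hδ u).2)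
      = eqToHom _ ≫ δ.func.map (δ.postcompLift hδ u).2 ≫ eqToHom _ :=
        Functor.congr_hom hδ.symm (δ.postcompLift hδ u).2
    _ = g.map u ≫ eqToHom hcod.symm := by
        rw [func_map_postcompLift]
        simp

/-- The lens structure on `f` induced by a lens `δ` on `f ⋙ g`, for `g` a discrete opfibration:
`u` is lifted to the `δ`-lift of `g.map u`. -/
def ofPostcomp (hg : IsDiscreteOpfibration g) : Lens A B where
  func := f
  lift _ _ u := δ.postcompLift hδ u
  lift_cod _ _ u := (δ.exists_map_postcompLift_eq hδ hg u).fst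
  lift_map _ _ u := (δ.exists_map_postcompLift_eq hδ hg u).snd
  lift_id := δ.postcompLift_id hδ
  lift_comp _ _ _ u v := δ.postcompLift_comp hδ u v (δ.exists_map_postcompLift_eq hδ hg u).fst

end OfPostcomp

theorem ofPostcomp_comp {f : A ⥤ B} {γ : Lens B C} (hγ : IsDiscreteOpfibration γ.func)
    (δ : Lens A C) (hδ : δ.func = f ⋙ γ.func) : (δ.ofPostcomp hδ hγ).comp γ = δ :=
  Lens.ext hδ.symm fun _ _ u => δ.postcompLift_of_map_eq hδ (γ.lift_cod u).symm (γ.lift_map u)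

end Lens

/-- If `g` is a discrete opfibration carrying the (unique) lens structure `γ`, and the
composite functor `f ⋙ g` carries a lens structure `δ`, then there is a unique lens
structure `φ` on `f` such that the lens composite of `(f, φ)` with `γ` is `δ`. -/
theorem exists_unique_lens_structure_of_comp {A B C : Type u}
    [SmallCategory A] [SmallCategory B] [SmallCategory C]
    (f : A ⥤ B) (g : B ⥤ C) (hg : IsDiscreteOpfibration g)
    (γ : Lens B C) (hγ : γ.func = g)
    (δ : Lens A C) (hδ : δ.func = f ⋙ g) :
    ∃! φ : Lens A B, φ.func = f ∧ φ.comp γ = δ := by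
  subst hγ
  have hcomp : (δ.ofPostcomp hδ hg).comp γ = δ := Lens.ofPostcomp_comp hg δ hδ
  refine ⟨δ.ofPostcomp hδ hg, ⟨rfl, hcomp⟩, ?_⟩
  rintro ψ ⟨hψfunc, hψcomp⟩
  exact Lens.eq_of_comp_eq_comp hg hψfunc (hψcomp.trans hcomp.symm)
end

section
/- Every lens (f, φ) : A ⇌ B between small categories may be represented as a commutative triangle of functors: there exist a small category X, a faithful bijective-on-objects functor p : X ⥤ A, and a discrete opfibration q : X ⥤ B such that f ∘ p = q. -/
/-!
The chosen lifts, i.e. the morphisms `w` with `φ (a, f w) = w`, form a wide subcategory `X` of `A`: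
axioms (2) and (3) say that they contain the identities and are closed under composition. For a
morphism `u` out of `f a`, a morphism `w` out of `a` is a chosen lift lying over `u` exactly when
`w = φ (a, u)`, so such a `w` exists and is unique: `f` restricted to `X` is a discrete opfibration.
-/

open CategoryTheory

universe u

section WideSubcategory

variable {C : Type*} [Category* C] (W : MorphismProperty C) [W.IsMultiplicative]

theorem wideSubcategoryInclusion_obj_bijective :
    Function.Bijective (wideSubcategoryInclusion W).obj :=
  ⟨fun _ _ h => WideSubcategory.ext h, fun a => ⟨⟨a⟩, rfl⟩⟩

/-- The morphisms of a wide subcategory out of `X`, with arbitrary codomain, as morphisms of the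
ambient category out of `X.obj`. Bundling the codomain turns uniqueness of lifts in the wide
subcategory into uniqueness in the ambient category. -/
def wideSubcategorySigmaHomEquiv (X : WideSubcategory W) :
    (Σ Y : WideSubcategory W, X ⟶ Y) ≃ {w : Σ Y : C, X.obj ⟶ Y // W w.2} where
  toFun w := ⟨⟨w.1.obj, w.2.hom⟩, w.2.property⟩
  invFun w := ⟨⟨w.1.1⟩, ⟨w.1.2, w.2⟩⟩

theorem existsUnique_wideSubcategory_hom_iff (X : WideSubcategory W)
    (p : (Σ Y : C, X.obj ⟶ Y) → Prop) :
    (∃! w : Σ Y : WideSubcategory W, X ⟶ Y, p ⟨w.1.obj, w.2.hom⟩) ↔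
      ∃! w : Σ Y : C, X.obj ⟶ Y, W w.2 ∧ p w := by
  refine ((wideSubcategorySigmaHomEquiv W X).existsUnique_congr (q := fun w => p w.1)
    fun _ => Iff.rfl).trans ?_
  simp only [ExistsUnique, Subtype.exists, Subtype.forall, Subtype.mk.injEq, and_imp, exists_prop,
    and_assoc]

end WideSubcategory

theorem isDiscreteOpfibration_wideSubcategoryInclusion_comp_iff {A B : Type u} [SmallCategory A]
    [SmallCategory B] (W : MorphismProperty A) [W.IsMultiplicative] (F : A ⥤ B) :
    IsDiscreteOpfibration (wideSubcategoryInclusion W ⋙ F) ↔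
      ∀ ⦃a : A⦄ ⦃b : B⦄ (u : F.obj a ⟶ b), ∃! w : Σ a' : A, a ⟶ a',
        W w.2 ∧ ∃ h : F.obj w.1 = b, F.map w.2 = u ≫ eqToHom h.symm :=
  ⟨fun hF a _ u => (existsUnique_wideSubcategory_hom_iff W ⟨a⟩ _).1 (hF u),
    fun hF a _ u => (existsUnique_wideSubcategory_hom_iff W a _).2 (hF u)⟩

theorem sigma_snd_comp_eqToHom {C : Type*} [Category* C] {X Y : C} {s : Σ Z : C, X ⟶ Z}
    {f : X ⟶ Y} (h : s = ⟨Y, f⟩) : s.2 ≫ eqToHom (congrArg Sigma.fst h) = f := by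
  subst h
  exact Category.comp_id f

namespace Lens

variable {A B : Type u} [SmallCategory A] [SmallCategory B] (L : Lens A B)

/-- The class of chosen lifts of a lens. A chosen lift is encoded as a morphism `w` that is the
lift of its own image, rather than as one of the form `φ (a, u)`: the two agree by `lift_eq_iff`,
and no morphism `u` has to be transported along an equality of objects of `B`. -/
def chosenLifts : MorphismProperty A :=
  fun _ a' w => L.lift (L.func.map w) = ⟨a', w⟩

theorem lift_comp_eqToHom {a : A} {b b' : B} (u : L.func.obj a ⟶ b) (h : b = b') :
    L.lift (u ≫ eqToHom h) = L.lift u := by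
  subst h
  rw [eqToHom_refl, Category.comp_id]

theorem chosenLifts_lift_snd {a : A} {b : B} (u : L.func.obj a ⟶ b) :
    L.chosenLifts (L.lift u).2 := by
  rw [chosenLifts, lift_map, lift_comp_eqToHom]

theorem lift_eq_iff {a : A} {b : B} (u : L.func.obj a ⟶ b) (w : Σ a' : A, a ⟶ a') :
    L.lift u = w ↔
      L.chosenLifts w.2 ∧ ∃ h : L.func.obj w.1 = b, L.func.map w.2 = u ≫ eqToHom h.symm := by
  constructor
  · rintro rfl
    exact ⟨L.chosenLifts_lift_snd u, L.lift_cod u, L.lift_map u⟩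
  · rintro ⟨hw, h, hu⟩
    rwa [chosenLifts, hu, lift_comp_eqToHom] at hw

theorem lift_map_comp {a a' : A} {w : a ⟶ a'} (hw : L.chosenLifts w) {b : B}
    (v : L.func.obj a' ⟶ b) :
    L.lift (L.func.map w ≫ v) = ⟨(L.lift v).1, w ≫ (L.lift v).2⟩ := by
  rw [lift_comp, L.lift_eqToHom (congrArg Sigma.fst hw), ← Category.assoc,
    sigma_snd_comp_eqToHom hw]

instance : L.chosenLifts.IsMultiplicative where
  id_mem a := by rw [chosenLifts, L.func.map_id, lift_id]
  comp_mem w w' hw hw' := by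
    rw [chosenLifts] at hw' ⊢
    rw [L.func.map_comp, L.lift_map_comp hw, hw']

theorem isDiscreteOpfibration_chosenLifts :
    IsDiscreteOpfibration (wideSubcategoryInclusion L.chosenLifts ⋙ L.func) := by
  rw [isDiscreteOpfibration_wideSubcategoryInclusion_comp_iff]
  intro a b u
  simp only [← lift_eq_iff, existsUnique_eq']

end Lens

/-- Every lens may be represented as a commutative triangle consisting of a faithful
bijective-on-objects functor followed by a discrete opfibration. -/
theorem lens_triangle_representation {A B : Type u} [SmallCategory A] [SmallCategory B]
    (L : Lens A B) :
    ∃ (X : Cat.{u, u}) (p : X ⥤ A) (q : X ⥤ B),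
      p.Faithful ∧ Function.Bijective p.obj ∧ IsDiscreteOpfibration q ∧ p ⋙ L.func = q := by
  exact ⟨Cat.of (WideSubcategory L.chosenLifts), wideSubcategoryInclusion L.chosenLifts,
    wideSubcategoryInclusion L.chosenLifts ⋙ L.func, wideSubcategory.faithful L.chosenLifts,
    wideSubcategoryInclusion_obj_bijective L.chosenLifts, L.isDiscreteOpfibration_chosenLifts, rfl⟩
end

section
/- The coproduct category A + C of small categories A and C is a coproduct in the category of small categories and lenses: the coproduct injections ι_A : A ⥤ A + C and ι_C : C ⥤ A + C are discrete opfibrations (hence carry unique lens structures), and for every pair of lenses (f, φ) : A ⇌ B and (g, γ) : C ⇌ B there exists a unique lens (h, θ) : A + C ⇌ B whose composites with the injection lenses equal (f, φ) and (g, γ) respectively. -/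
open CategoryTheory

universe u

/-!
A lens is determined by its functor together with the class of its *chosen lifts*. A lens over a
discrete opfibration chooses every morphism, and a morphism is chosen by a composite of lenses
exactly when it is chosen by the first and its image is chosen by the second. Since every morphism
of `A ⊕ C` comes from `A` or from `C`, a lens out of `A ⊕ C` is therefore determined by its
composites with the two injections.
-/

universe v₁ v₂ v₃ u₁ u₂ u₃

section FunctorStar

variable {A : Type u₁} [Category.{v₁} A] {B : Type u₂} [Category.{v₂} B]
  {C : Type u₃} [Category.{v₃} C]

theorem functor_sum_ext {F G : A ⊕ C ⥤ B} (hl : Sum.inl_ A C ⋙ F = Sum.inl_ A C ⋙ G)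
    (hr : Sum.inr_ A C ⋙ F = Sum.inr_ A C ⋙ G) : F = G := by
  refine CategoryTheory.Functor.ext ?_ ?_
  · rintro (a | c)
    · exact Functor.congr_obj hl a
    · exact Functor.congr_obj hr c
  · intro x y w
    induction w using Sum.homInduction with
    | inl a a' w => exact Functor.congr_hom hl w
    | inr c c' w => exact Functor.congr_hom hr w

theorem star_eq_mk_iff (F : A ⥤ B) {a : A} {b : B} (w : Quiver.Star a) (u : F.obj a ⟶ b) :
    F.toPrefunctor.star a w = ⟨b, u⟩ ↔ ∃ h : F.obj w.1 = b, F.map w.2 = u ≫ eqToHom h.symm := by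
  constructor
  · intro h
    cases h
    exact ⟨rfl, (Category.comp_id _).symm⟩
  · rintro ⟨rfl, h⟩
    exact congrArg (Sigma.mk _) (h.trans (Category.comp_id u))

theorem star_inl_bijective (a : A) : Function.Bijective ((Sum.inl_ A C).toPrefunctor.star a) := by
  constructor
  · rintro ⟨a₁, w₁⟩ ⟨a₂, w₂⟩ h
    cases h
    rfl
  · rintro ⟨a' | c, u⟩
    · exact ⟨⟨a', u.down⟩, rfl⟩
    · exact (hom_inl_inr_false A C u).elim

theorem star_inr_bijective (c : C) : Function.Bijective ((Sum.inr_ A C).toPrefunctor.star c) := by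
  constructor
  · rintro ⟨c₁, w₁⟩ ⟨c₂, w₂⟩ h
    cases h
    rfl
  · rintro ⟨a | c', u⟩
    · exact (hom_inr_inl_false C A u).elim
    · exact ⟨⟨c', u.down⟩, rfl⟩

end FunctorStar

section DiscreteOpfibration

variable {A B C : Type u} [SmallCategory A] [SmallCategory B] [SmallCategory C]

theorem isDiscreteOpfibration_iff_star_bijective {F : A ⥤ B} :
    IsDiscreteOpfibration F ↔ ∀ a, Function.Bijective (F.toPrefunctor.star a) := by
  simp only [IsDiscreteOpfibration, ← star_eq_mk_iff, Function.bijective_iff_existsUnique,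
    Sigma.forall]
  rfl

theorem isDiscreteOpfibration_inl : IsDiscreteOpfibration (Sum.inl_ A C) :=
  isDiscreteOpfibration_iff_star_bijective.2 star_inl_bijective

theorem isDiscreteOpfibration_inr : IsDiscreteOpfibration (Sum.inr_ A C) :=
  isDiscreteOpfibration_iff_star_bijective.2 star_inr_bijective

end DiscreteOpfibration

namespace Lens

variable {A B C : Type u} [SmallCategory A] [SmallCategory B] [SmallCategory C]

theorem star_lift (L : Lens A B) {a : A} {b : B} (u : L.func.obj a ⟶ b) :
    L.func.toPrefunctor.star a (L.lift u) = ⟨b, u⟩ :=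
  (star_eq_mk_iff _ _ _).2 ⟨L.lift_cod u, L.lift_map u⟩

/-- A morphism `w` of the domain of a lens is a chosen lift if it is the lift of its own image.
Being of the form `φ (a, u)` for some `u` is thus expressed without transporting `u` along an
equality of objects. -/
def IsChosen (L : Lens A B) {a a' : A} (w : a ⟶ a') : Prop :=
  L.lift (L.func.map w) = ⟨a', w⟩

theorem isChosen_lift (L : Lens A B) {a : A} {b : B} (u : L.func.obj a ⟶ b) :
    L.IsChosen (L.lift u).2 :=
  congrArg (fun s : Quiver.Star (L.func.obj a) ↦ L.lift s.2) (L.star_lift u)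

theorem IsChosen.lift_eq {L : Lens A B} {a a' : A} {w : a ⟶ a'} (hw : L.IsChosen w) {b : B}
    {u : L.func.obj a ⟶ b} (hwu : L.func.toPrefunctor.star a ⟨a', w⟩ = ⟨b, u⟩) :
    L.lift u = ⟨a', w⟩ := by
  cases hwu
  exact hw

theorem ext_of_isChosen {L M : Lens A B} (hfunc : L.func = M.func)
    (hchosen : ∀ ⦃a a' : A⦄ (w : a ⟶ a'), L.IsChosen w → M.IsChosen w) : L = M := by
  obtain ⟨F, l, hcod, hmap, hid, hcomp⟩ := L
  obtain ⟨G, m, _, _, _, _⟩ := M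
  obtain rfl : F = G := hfunc
  obtain rfl : l = m := by
    funext a b u
    let L : Lens A B := ⟨F, l, hcod, hmap, hid, hcomp⟩
    exact ((hchosen _ (L.isChosen_lift u)).lift_eq (L.star_lift u)).symm
  rfl

theorem isChosen_comp_iff (L : Lens A B) (M : Lens B C) {a a' : A} (w : a ⟶ a') :
    (L.comp M).IsChosen w ↔ L.IsChosen w ∧ M.IsChosen (L.func.map w) := by
  let v : Quiver.Star (L.func.obj a) := M.lift (M.func.map (L.func.map w))
  have lift_v : M.IsChosen (L.func.map w) → L.lift v.2 = L.lift (L.func.map w) :=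
    congrArg fun s : Quiver.Star (L.func.obj a) ↦ L.lift s.2
  constructor
  · intro hw
    have hM : M.IsChosen (L.func.map w) :=
      (L.star_lift v.2).symm.trans (congrArg (L.func.toPrefunctor.star a) hw)
    exact ⟨(lift_v hM).symm.trans hw, hM⟩
  · rintro ⟨hL, hM⟩
    exact (lift_v hM).trans hL

end Lens

namespace IsDiscreteOpfibration

variable {A B : Type u} [SmallCategory A] [SmallCategory B] {F : A ⥤ B}

theorem isChosen {L : Lens A B} (hL : IsDiscreteOpfibration L.func) {a a' : A} (w : a ⟶ a') :
    L.IsChosen w :=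
  (isDiscreteOpfibration_iff_star_bijective.1 hL a).injective (L.star_lift _)

/-- The lens structure carried by a discrete opfibration, lifting a morphism to its unique
preimage. -/
noncomputable def toLens (hF : IsDiscreteOpfibration F) : Lens A B where
  func := F
  lift _ _ u := (hF u).choose
  lift_cod _ _ u := (hF u).choose_spec.1.1
  lift_map _ _ u := (hF u).choose_spec.1.2
  lift_id a := (hF (𝟙 (F.obj a))).unique (hF _).choose_spec.1 ⟨rfl, by simp⟩
  lift_comp a b c u v := by
    have hu := (hF u).choose_spec.1.2
    refine (hF (u ≫ v)).unique (hF _).choose_spec.1 ⟨(hF _).choose_spec.1.1, ?_⟩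
    rw [F.map_comp, hu, (hF (_ ≫ v)).choose_spec.1.2]
    simp

theorem eq_toLens (hF : IsDiscreteOpfibration F) {L : Lens A B} (hL : L.func = F) :
    L = hF.toLens :=
  Lens.ext_of_isChosen hL fun _ _ w _ ↦ isChosen (L := hF.toLens) hF w

end IsDiscreteOpfibration

namespace Lens

variable {A B C : Type u} [SmallCategory A] [SmallCategory B] [SmallCategory C]

variable (A C) in
/-- The injection lens of the left summand into a coproduct category. -/
noncomputable def inl : Lens A (A ⊕ C) :=
  isDiscreteOpfibration_inl.toLens

variable (A C) in
/-- The injection lens of the right summand into a coproduct category. -/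
noncomputable def inr : Lens C (A ⊕ C) :=
  isDiscreteOpfibration_inr.toLens

/-- The lens out of a coproduct category induced by lenses out of the two summands. -/
def sum' (f : Lens A B) (g : Lens C B) : Lens (A ⊕ C) B where
  func := f.func.sum' g.func
  lift
    | .inl a, _, u => (Sum.inl_ A C).toPrefunctor.star a (f.lift u)
    | .inr c, _, u => (Sum.inr_ A C).toPrefunctor.star c (g.lift u)
  lift_cod
    | .inl _, _, u => f.lift_cod u
    | .inr _, _, u => g.lift_cod u
  lift_map
    | .inl _, _, u => f.lift_map u
    | .inr _, _, u => g.lift_map u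
  lift_id
    | .inl a => congrArg ((Sum.inl_ A C).toPrefunctor.star a) (f.lift_id a)
    | .inr c => congrArg ((Sum.inr_ A C).toPrefunctor.star c) (g.lift_id c)
  lift_comp
    | .inl a, _, _, u, v => congrArg ((Sum.inl_ A C).toPrefunctor.star a) (f.lift_comp u v)
    | .inr c, _, _, u, v => congrArg ((Sum.inr_ A C).toPrefunctor.star c) (g.lift_comp u v)

theorem isChosen_inl_comp_iff (h : Lens (A ⊕ C) B) {a a' : A} (w : a ⟶ a') :
    ((inl A C).comp h).IsChosen w ↔ h.IsChosen ((Sum.inl_ A C).map w) := by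
  rw [isChosen_comp_iff]
  exact and_iff_right (isDiscreteOpfibration_inl.isChosen (L := inl A C) w)

theorem isChosen_inr_comp_iff (h : Lens (A ⊕ C) B) {c c' : C} (w : c ⟶ c') :
    ((inr A C).comp h).IsChosen w ↔ h.IsChosen ((Sum.inr_ A C).map w) := by
  rw [isChosen_comp_iff]
  exact and_iff_right (isDiscreteOpfibration_inr.isChosen (L := inr A C) w)

theorem IsChosen.sum'_inl {f : Lens A B} {a a' : A} {w : a ⟶ a'} (hw : f.IsChosen w)
    (g : Lens C B) : (f.sum' g).IsChosen ((Sum.inl_ A C).map w) :=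
  congrArg ((Sum.inl_ A C).toPrefunctor.star a) hw

theorem IsChosen.sum'_inr {g : Lens C B} {c c' : C} {w : c ⟶ c'} (hw : g.IsChosen w)
    (f : Lens A B) : (f.sum' g).IsChosen ((Sum.inr_ A C).map w) :=
  congrArg ((Sum.inr_ A C).toPrefunctor.star c) hw

theorem inl_comp_sum' (f : Lens A B) (g : Lens C B) : (inl A C).comp (f.sum' g) = f :=
  Eq.symm <| ext_of_isChosen rfl fun _ _ w hw ↦ (isChosen_inl_comp_iff _ w).2 (hw.sum'_inl g)

theorem inr_comp_sum' (f : Lens A B) (g : Lens C B) : (inr A C).comp (f.sum' g) = g :=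
  Eq.symm <| ext_of_isChosen rfl fun _ _ w hw ↦ (isChosen_inr_comp_iff _ w).2 (hw.sum'_inr f)

theorem sum_ext {h k : Lens (A ⊕ C) B} (hl : (inl A C).comp h = (inl A C).comp k)
    (hr : (inr A C).comp h = (inr A C).comp k) : h = k := by
  refine ext_of_isChosen (functor_sum_ext (congrArg func hl) (congrArg func hr)) fun _ _ w hw ↦ ?_
  induction w using Sum.homInduction with
  | inl a a' w => rwa [← isChosen_inl_comp_iff, hl, isChosen_inl_comp_iff] at hw
  | inr c c' w => rwa [← isChosen_inr_comp_iff, hr, isChosen_inr_comp_iff] at hw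

end Lens

/-- The coproduct of small categories is a coproduct in the category of small categories
and lenses: the injections are discrete opfibrations (hence carry unique lens
structures), and any pair of lenses out of the summands factors uniquely. -/
theorem lens_coproduct {A C B : Type u} [SmallCategory A] [SmallCategory C] [SmallCategory B] :
    IsDiscreteOpfibration (Sum.inl_ A C) ∧ IsDiscreteOpfibration (Sum.inr_ A C) ∧
    ∀ (ιA : Lens A (A ⊕ C)) (ιC : Lens C (A ⊕ C)),
      ιA.func = Sum.inl_ A C → ιC.func = Sum.inr_ A C →
      ∀ (f : Lens A B) (g : Lens C B),
        ∃! h : Lens (A ⊕ C) B, ιA.comp h = f ∧ ιC.comp h = g := by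
  refine ⟨isDiscreteOpfibration_inl, isDiscreteOpfibration_inr, fun ιA ιC hA hC f g ↦ ?_⟩
  obtain rfl : ιA = Lens.inl A C := isDiscreteOpfibration_inl.eq_toLens hA
  obtain rfl : ιC = Lens.inr A C := isDiscreteOpfibration_inr.eq_toLens hC
  refine ⟨f.sum' g, ⟨f.inl_comp_sum' g, f.inr_comp_sum' g⟩, ?_⟩
  rintro k ⟨hf, hg⟩
  exact Lens.sum_ext (hf.trans (f.inl_comp_sum' g).symm) (hg.trans (f.inr_comp_sum' g).symm)
end

section
/- The category of small categories and lenses has equalisers: for every parallel pair of lenses (f, φ), (g, γ) : A ⇌ B there exist a small category E and a lens (e, ε) : E ⇌ A such that the composites of (e, ε) with (f, φ) and with (g, γ) are equal as lenses, and for every lens (h, θ) : D ⇌ A whose composites with (f, φ) and (g, γ) are equal as lenses, there exists a unique lens (k, κ) : D ⇌ E whose composite with (e, ε) equals (h, θ). -/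
open CategoryTheory

universe u

/-!
The functor of a lens lifts every morphism out of an object in its image, so its image is closed
under outgoing morphisms: a cosieve. A lens `h` into `A` equalises `f` and `g` exactly when `f` and
`g` agree at every object of its image, both in what they do to outgoing morphisms and in their
lifts there. The equaliser is therefore the full subcategory on the largest cosieve of `A`
consisting of objects at which `f` and `g` agree.
-/

section Cosieve

variable {C : Type*} [Category* C] {P Q : ObjectProperty C}

/-- A property of objects is a cosieve if it is preserved along morphisms; equivalently, the
inclusion of the corresponding full subcategory is a discrete opfibration. -/
def IsCosieve (P : ObjectProperty C) : Prop :=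
  ∀ ⦃a a' : C⦄, (a ⟶ a') → P a → P a'

/-- The largest cosieve contained in `P`. -/
def cosieveInterior (P : ObjectProperty C) : ObjectProperty C :=
  fun a => ∀ ⦃a' : C⦄, (a ⟶ a') → P a'

theorem isCosieve_cosieveInterior : IsCosieve (cosieveInterior P) :=
  fun _ _ w ha _ w' => ha (w ≫ w')

theorem cosieveInterior_le : cosieveInterior P ≤ P :=
  fun a ha => ha (𝟙 a)

theorem IsCosieve.le_cosieveInterior (hQ : IsCosieve Q) (hQP : Q ≤ P) : Q ≤ cosieveInterior P :=
  fun _ ha a' w => hQP a' (hQ w ha)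

end Cosieve

namespace Lens

variable {A B D : Type u} [SmallCategory A] [SmallCategory B] [SmallCategory D]

theorem sigma_map_lift (L : Lens A B) {a : A} {b : B} (u : L.func.obj a ⟶ b) :
    (⟨L.func.obj (L.lift u).1, L.func.map (L.lift u).2⟩ : Σ b', L.func.obj a ⟶ b') = ⟨b, u⟩ :=
  Sigma.ext (L.lift_cod u) (by rw [L.lift_map]; exact comp_eqToHom_heq _ _)

theorem lift_eq_lift_iff (L : Lens A B) {a : A} {b b' : B} (u : L.func.obj a ⟶ b)
    (u' : L.func.obj a ⟶ b') :
    L.lift u = L.lift u' ↔ (⟨b, u⟩ : Σ b, L.func.obj a ⟶ b) = ⟨b', u'⟩ := by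
  constructor
  · intro h
    rw [← L.sigma_map_lift u, ← L.sigma_map_lift u', h]
  · rintro ⟨⟩
    rfl

theorem isCosieve_ofObj (h : Lens D A) : IsCosieve (ObjectProperty.ofObj h.func.obj) := by
  rintro _ a' w ⟨d⟩
  rw [← h.lift_cod w]
  exact .mk _

theorem cosieveInterior_func_obj {P : ObjectProperty A} (h : Lens D A)
    (hP : ∀ d, P (h.func.obj d)) (d : D) : cosieveInterior P (h.func.obj d) :=
  h.isCosieve_ofObj.le_cosieveInterior (ObjectProperty.ofObj_le_iff _ _ |>.2 hP) _ (.mk d)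

/-- Two lenses agree at an object `a` if their functors agree on `a` and on the morphisms out of
`a`, and their lifting operations agree at `a`. The two images of `a` are only propositionally
equal, so morphisms out of them are compared by heterogeneous equality. -/
structure AgreesAt (f g : Lens A B) (a : A) : Prop where
  obj_eq : f.func.obj a = g.func.obj a
  map_heq : ∀ ⦃a' : A⦄ (w : a ⟶ a'), f.func.map w ≍ g.func.map w
  lift_eq : ∀ ⦃b : B⦄ (u : f.func.obj a ⟶ b) (v : g.func.obj a ⟶ b), u ≍ v → f.lift u = g.lift v

theorem AgreesAt.refl (f : Lens A B) (a : A) : AgreesAt f f a where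
  obj_eq := rfl
  map_heq _ _ := HEq.rfl
  lift_eq _ _ _ huv := by rw [eq_of_heq huv]

theorem eq_iff_forall_agreesAt {f g : Lens A B} : f = g ↔ ∀ a, AgreesAt f g a := by
  constructor
  · rintro rfl
    exact AgreesAt.refl f
  · intro h
    obtain ⟨F, φ, _, _, _, _⟩ := f
    obtain ⟨G, γ, _, _, _, _⟩ := g
    obtain rfl : F = G := Functor.hext (fun a => (h a).obj_eq) fun a _ w => (h a).map_heq w
    obtain rfl : φ = γ := by
      funext a b u
      exact (h a).lift_eq u u HEq.rfl
    rfl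

theorem agreesAt_comp_iff {f g : Lens A B} (h : Lens D A) {d : D} :
    AgreesAt (h.comp f) (h.comp g) d ↔ AgreesAt f g (h.func.obj d) := by
  constructor
  · intro H
    refine ⟨H.obj_eq, fun a' w => ?_, fun b u v huv => ?_⟩
    · suffices ∀ x : Σ a', h.func.obj d ⟶ a', f.func.map x.2 ≍ g.func.map x.2 from this ⟨a', w⟩
      rintro ⟨a', w⟩
      rw [← h.sigma_map_lift w]
      exact H.map_heq (h.lift w).2
    · exact (h.lift_eq_lift_iff (f.lift u).2 (g.lift v).2).1 (H.lift_eq u v huv)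
  · intro H
    exact ⟨H.obj_eq, fun _ w => H.map_heq (h.func.map w), fun _ u v huv =>
      (h.lift_eq_lift_iff (f.lift u).2 (g.lift v).2).2 (H.lift_eq u v huv)⟩

theorem comp_eq_comp_iff {f g : Lens A B} (h : Lens D A) :
    h.comp f = h.comp g ↔ ∀ d, AgreesAt f g (h.func.obj d) :=
  eq_iff_forall_agreesAt.trans (forall_congr' fun _ => agreesAt_comp_iff h)

section FullSubcategory

variable {P : ObjectProperty A}

/-- The inclusion of a cosieve, as a lens: every morphism out of an object of the cosieve is its
own lift. -/
def cosieveInclusion (hP : IsCosieve P) : Lens P.FullSubcategory A where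
  func := P.ι
  lift a b u := ⟨⟨b, hP u a.property⟩, ObjectProperty.homMk u⟩
  lift_cod _ _ _ := rfl
  lift_map _ _ u := (Category.comp_id u).symm
  lift_id _ := rfl
  lift_comp _ _ _ _ _ := by
    simp only [eqToHom_refl, Category.id_comp]
    rfl

/-- The restriction of the codomain of a lens to a full subcategory containing its image. -/
def codRestrict (h : Lens D A) (hh : ∀ d, P (h.func.obj d)) : Lens D P.FullSubcategory where
  func := P.lift h.func hh
  lift _ _ u := h.lift u.hom
  lift_cod _ _ u := ObjectProperty.FullSubcategory.ext (h.lift_cod u.hom)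
  lift_map _ _ u := by
    apply P.ι.map_injective
    rw [Functor.map_comp, eqToHom_map]
    exact h.lift_map u.hom
  lift_id d := h.lift_id d
  lift_comp d b c u v := by
    have hom_eqToHom_comp (p : (P.lift h.func hh).obj (h.lift u.hom).1 = b) :
        (eqToHom p ≫ v).hom = eqToHom (h.lift_cod u.hom) ≫ v.hom := by
      change P.ι.map (eqToHom p ≫ v) = _
      rw [Functor.map_comp, eqToHom_map]
      rfl
    rw [hom_eqToHom_comp]
    exact h.lift_comp u.hom v.hom

theorem codRestrict_comp_cosieveInclusion (hP : IsCosieve P) (h : Lens D A)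
    (hh : ∀ d, P (h.func.obj d)) : (h.codRestrict hh).comp (cosieveInclusion hP) = h :=
  rfl

theorem codRestrict_comp (hP : IsCosieve P) (k : Lens D P.FullSubcategory) :
    (k.comp (cosieveInclusion hP)).codRestrict (fun d => (k.func.obj d).property) = k :=
  rfl

theorem existsUnique_comp_cosieveInclusion (hP : IsCosieve P) (h : Lens D A)
    (hh : ∀ d, P (h.func.obj d)) : ∃! k : Lens D P.FullSubcategory,
      k.comp (cosieveInclusion hP) = h := by
  refine ⟨h.codRestrict hh, codRestrict_comp_cosieveInclusion hP h hh, ?_⟩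
  rintro k rfl
  exact (codRestrict_comp hP k).symm

end FullSubcategory

end Lens

/-- The category of small categories and lenses has equalisers. -/
theorem lens_equalisers {A B : Type u} [SmallCategory A] [SmallCategory B]
    (f g : Lens A B) :
    ∃ (E : Cat.{u, u}) (e : Lens E A),
      e.comp f = e.comp g ∧
      ∀ (D : Type u) [SmallCategory D] (h : Lens D A),
        h.comp f = h.comp g → ∃! k : Lens D E, k.comp e = h := by
  let P : ObjectProperty A := cosieveInterior (Lens.AgreesAt f g)
  have hP : IsCosieve P := isCosieve_cosieveInterior
  refine ⟨Cat.of P.FullSubcategory, Lens.cosieveInclusion hP, ?_, fun D _ h hfg => ?_⟩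
  · exact (Lens.comp_eq_comp_iff _).2 fun a => cosieveInterior_le _ a.property
  · have agrees : ∀ d, Lens.AgreesAt f g (h.func.obj d) := (Lens.comp_eq_comp_iff h).1 hfg
    exact Lens.existsUnique_comp_cosieveInclusion hP h (h.cosieveInterior_func_obj agrees)
end

section
/- If a lens (f, φ) : A ⇌ B has underlying functor f surjective on objects, then f is also surjective on morphisms, and the lens is an epimorphism in the category of small categories and lenses: for any lenses (g, γ), (g', γ') : B ⇌ C, if the composite of (f, φ) with (g, γ) equals the composite of (f, φ) with (g', γ') as lenses, then (g, γ) = (g', γ'). -/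
open CategoryTheory

universe u

/-!
The chosen lifts over `f a` form a section of the action of `f` on morphisms out of `a`. So every
morphism out of an object in the image of `f` is in the image of `f`, and it is determined by its
chosen lift. The former lets one cancel `f` from the functor of a composite lens, the latter from
its lifting operation.
-/

theorem functor_eq_of_comp_eq_of_surjective_mapArrow {A B C : Type*} [Category* A] [Category* B]
    [Category* C] {F : A ⥤ B} (hF : Function.Surjective F.mapArrow.obj) {G H : B ⥤ C}
    (h : F ⋙ G = F ⋙ H) : G = H := by
  refine Arrow.functor_ext fun b b' v ↦ ?_
  obtain ⟨w, hw⟩ := hF (Arrow.mk v)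
  rw [← hw]
  exact congrArg (fun K : A ⥤ C ↦ K.mapArrow.obj w) h

namespace Lens

variable {A B : Type u} [SmallCategory A] [SmallCategory B]

theorem eq_iff_func_lift {x y : Lens A B} :
    x = y ↔ ∃ h : x.func = y.func, ∀ ⦃a : A⦄ ⦃b : B⦄ (u : x.func.obj a ⟶ b),
      x.lift u = y.lift (eqToHom (Functor.congr_obj h a).symm ≫ u) := by
  constructor
  · rintro rfl
    exact ⟨rfl, by simp⟩
  · rintro ⟨hfunc, hlift⟩
    obtain ⟨F, l, _, _, _, _⟩ := x
    obtain ⟨G, m, _, _, _, _⟩ := y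
    obtain rfl : F = G := hfunc
    obtain rfl : l = m := by
      funext a b u
      simpa using hlift u
    rfl

theorem leftInverse_star_lift (L : Lens A B) (a : A) :
    Function.LeftInverse (L.func.toPrefunctor.star a)
      fun s : Quiver.Star (L.func.obj a) ↦ L.lift s.2 := by
  rintro ⟨b, u⟩
  exact Sigma.ext (L.lift_cod u)
    ((heq_of_eq (L.lift_map u)).trans (comp_eqToHom_heq u (L.lift_cod u).symm))

theorem lift_injective (L : Lens A B) (a : A) :
    Function.Injective fun s : Quiver.Star (L.func.obj a) ↦ L.lift s.2 :=
  (L.leftInverse_star_lift a).injective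

theorem mapArrow_obj_surjective (L : Lens A B) (hsurj : Function.Surjective L.func.obj) :
    Function.Surjective L.func.mapArrow.obj := by
  rintro ⟨b, b', v⟩
  obtain ⟨a, rfl⟩ := hsurj b
  exact ⟨Arrow.mk (L.lift v).2,
    congrArg (fun s : Quiver.Star (L.func.obj a) ↦ Arrow.mk s.2) (L.leftInverse_star_lift a ⟨_, v⟩)⟩

theorem isEpi_of_surjective (L : Lens A B) (hsurj : Function.Surjective L.func.obj) :
    L.IsEpi := by
  intro C _ x y h
  obtain ⟨hfunc, hlift⟩ := eq_iff_func_lift.1 h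
  refine eq_iff_func_lift.2 ⟨functor_eq_of_comp_eq_of_surjective_mapArrow
    (L.mapArrow_obj_surjective hsurj) hfunc, fun b c u ↦ ?_⟩
  obtain ⟨a, rfl⟩ := hsurj b
  exact L.lift_injective a (hlift u)

end Lens

/-- If the underlying functor of a lens is surjective on objects, then it is surjective
on morphisms, and the lens is an epimorphism in the category of small categories and
lenses. -/
theorem lens_epi_of_surjective {A B : Type u} [SmallCategory A] [SmallCategory B]
    (f : Lens A B) (hsurj : Function.Surjective f.func.obj) :
    (∀ ⦃b b' : B⦄ (v : b ⟶ b'), ∃ (a a' : A) (u : a ⟶ a') (h : f.func.obj a = b)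
        (h' : f.func.obj a' = b'), f.func.map u = eqToHom h ≫ v ≫ eqToHom h'.symm) ∧
    f.IsEpi := by
  refine ⟨fun b b' v ↦ ?_, f.isEpi_of_surjective hsurj⟩
  obtain ⟨w, hw⟩ := f.mapArrow_obj_surjective hsurj (Arrow.mk v)
  obtain ⟨h, h', hv⟩ := (Arrow.mk_eq_mk_iff _ _).1 hw
  exact ⟨_, _, w.hom, h, h', hv⟩
end

section
/- The category of small categories and lenses is balanced: a lens (f, φ) : A ⇌ B is an isomorphism (i.e. there exists a lens (g, γ) : B ⇌ A whose composites with (f, φ) in both orders are identity lenses) if and only if it is both a monomorphism (left-cancellable with respect to lens composition) and an epimorphism (right-cancellable with respect to lens composition). -/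
open CategoryTheory

universe u

/-!
A lens over an identity functor is an identity lens, and every isomorphism of categories underlies
a lens, so a lens is invertible as soon as its functor is. For a lens `f` the projections of the
strict pullback of `f` with itself are lenses that agree after composition with `f`; if `f` is
monic, they coincide, which makes `f` injective on objects and faithful. Then `f` is also full: the
lift of a morphism `f a ⟶ f a'` ends at an object over `f a'`, which can only be `a'`.

For surjectivity, suppose that `f` is epic and misses `b₀`. Then no object in the image of `f`
admits a morphism to `b₀`, as its lift would end over `b₀`. Hence the two global sections
`b ↦ ∅` and `b ↦ Hom(b, b₀)` of the functor of subsets of `Hom(-, b₀)` agree on the image of `f`.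
They define lenses from the codomain of `f` to the category of elements that become equal after
precomposition with `f`, yet they differ at `b₀`.
-/

namespace Lens

section General

variable {A B C D : Type u} [SmallCategory A] [SmallCategory B] [SmallCategory C] [SmallCategory D]

theorem comp_id (L : Lens A B) : L.comp (id B) = L := rfl

theorem id_comp (L : Lens A B) : (id A).comp L = L := rfl

theorem comp_assoc (L : Lens A B) (M : Lens B C) (N : Lens C D) :
    (L.comp M).comp N = L.comp (M.comp N) := rfl

theorem isMono_of_comp_eq_id {f : Lens A B} {g : Lens B A} (h : f.comp g = id A) : f.IsMono := by
  intro D _ x y hxy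
  rw [← x.comp_id, ← y.comp_id, ← h, ← comp_assoc, ← comp_assoc, hxy]

theorem isEpi_of_comp_eq_id {f : Lens A B} {g : Lens B A} (h : g.comp f = id B) : f.IsEpi := by
  intro C _ x y hxy
  rw [← x.id_comp, ← y.id_comp, ← h, comp_assoc, comp_assoc, hxy]

/-- The lift at `a` of a morphism `b ⟶ b'` whose domain is only propositionally equal to the
image of `a`. -/
def liftOver (L : Lens A B) {a : A} {b b' : B} (h : L.func.obj a = b) (u : b ⟶ b') :
    Σ a' : A, a ⟶ a' :=
  L.lift (eqToHom h ≫ u)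

variable (L : Lens A B)

theorem liftOver_rfl {a : A} {b : B} (u : L.func.obj a ⟶ b) : L.liftOver rfl u = L.lift u := by
  simp [liftOver]

theorem liftOver_cod {a : A} {b b' : B} (h : L.func.obj a = b) (u : b ⟶ b') :
    L.func.obj (L.liftOver h u).1 = b' :=
  L.lift_cod _

theorem map_liftOver {a : A} {b b' : B} (h : L.func.obj a = b) (u : b ⟶ b') :
    L.func.map (L.liftOver h u).2 = eqToHom h ≫ u ≫ eqToHom (L.liftOver_cod h u).symm :=
  (L.lift_map _).trans (Category.assoc _ _ _)

theorem liftOver_id {a : A} {b : B} (h : L.func.obj a = b) : L.liftOver h (𝟙 b) = ⟨a, 𝟙 a⟩ := by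
  subst h
  rw [liftOver_rfl, lift_id]

theorem liftOver_comp {a : A} {b b' b'' : B} (h : L.func.obj a = b) (u : b ⟶ b') (v : b' ⟶ b'') :
    L.liftOver h (u ≫ v) = ⟨(L.liftOver (L.liftOver_cod h u) v).1,
      (L.liftOver h u).2 ≫ (L.liftOver (L.liftOver_cod h u) v).2⟩ := by
  rw [liftOver, ← Category.assoc, lift_comp]
  rfl

theorem liftOver_comp_eqToHom {a : A} {b b' b'' : B} (h : L.func.obj a = b) (u : b ⟶ b')
    (h' : b' = b'') : L.liftOver h (u ≫ eqToHom h') = L.liftOver h u := by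
  subst h'
  simp

variable {L}

theorem liftOver_map_lift {M : Lens C B} {a : A} {c : C} {b : B} (h : M.func.obj c = L.func.obj a)
    (u : L.func.obj a ⟶ b) : M.liftOver h (L.func.map (L.lift u).2) = M.liftOver h u := by
  rw [lift_map, liftOver_comp_eqToHom]

theorem liftOver_map_liftOver {M : Lens C B} {a : A} {c : C} {b : B}
    (h : L.func.obj a = M.func.obj c) (u : L.func.obj a ⟶ b) :
    L.liftOver h (M.func.map (M.liftOver h.symm u).2) = L.lift u := by
  rw [map_liftOver, ← Category.assoc, liftOver_comp_eqToHom, liftOver]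
  simp

theorem ext_of_func_eq {M : Lens A B} (h : L.func = M.func)
    (h_lift : ∀ (a : A) (b : B) (u : L.func.obj a ⟶ b),
      L.lift u = M.liftOver (Functor.congr_obj h a).symm u) : L = M := by
  obtain ⟨F, l, _, _, _, _⟩ := L
  obtain ⟨G, m, _, _, _, _⟩ := M
  obtain rfl : F = G := h
  obtain rfl : l = m := by
    funext a b u
    simpa [liftOver] using h_lift a b u
  rfl

theorem full_of_obj_injective (h : Function.Injective L.func.obj) : L.func.Full where
  map_surjective u := ⟨(L.lift u).2 ≫ eqToHom (h (L.lift_cod u)), by simp [lift_map, eqToHom_map]⟩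

end General

section Iso

variable {A B : Type u} [SmallCategory A] [SmallCategory B]

theorem eq_id_of_func_eq {L : Lens A A} (h : L.func = 𝟭 A) : L = id A := by
  refine ext_of_func_eq h fun a b u =>
    Sigma.ext ((Functor.congr_obj h _).symm.trans (L.lift_cod u)) ?_
  have h_map : (L.lift u).2 ≍ L.func.map (L.lift u).2 := (Functor.hcongr_hom h _).symm
  rw [L.lift_map] at h_map
  exact h_map.trans ((comp_eqToHom_heq _ _).trans (eqToHom_comp_heq _ _).symm)

/-- An isomorphism of categories as a lens: lifts are computed by the inverse functor. -/
def ofIsoCat (e : IsoCat A B) : Lens A B where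
  func := e.functor
  lift a b u := ⟨e.inverse.obj b, eqToHom (Functor.congr_obj e.unit_eq a) ≫ e.inverse.map u⟩
  lift_cod _ b _ := Functor.congr_obj e.counit_eq b
  lift_map a b u := by
    have h_map := Functor.congr_hom e.counit_eq u
    simp_all [eqToHom_map]
  lift_id a := Sigma.ext (Functor.congr_obj e.unit_eq a).symm (by simp [eqToHom_heq_id_dom])
  lift_comp a b c u v := by simp [eqToHom_map]

theorem exists_inverse_of_isIso_func (f : Lens A B) [f.func.IsIso] :
    ∃ g : Lens B A, f.comp g = id A ∧ g.comp f = id B :=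
  ⟨ofIsoCat f.func.asIsomorphism.symm, eq_id_of_func_eq f.func.asIsomorphism.unit_eq.symm,
    eq_id_of_func_eq f.func.asIsomorphism.counit_eq⟩

end Iso

end Lens

/-- The strict pullback of a cospan of functors: pairs of objects with equal images. -/
structure StrictPullback {A B C : Type*} [Category* A] [Category* B] [Category* C]
    (F : A ⥤ C) (G : B ⥤ C) where
  fst : A
  snd : B
  condition : F.obj fst = G.obj snd

namespace StrictPullback

section

variable {A B C : Type*} [Category* A] [Category* B] [Category* C] {F : A ⥤ C} {G : B ⥤ C}

/-- A morphism of the strict pullback: a pair of morphisms with equal images. -/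
@[ext]
structure Hom (p q : StrictPullback F G) where
  fst : p.fst ⟶ q.fst
  snd : p.snd ⟶ q.snd
  condition : F.map fst ≫ eqToHom q.condition = eqToHom p.condition ≫ G.map snd

instance : Category (StrictPullback F G) where
  Hom := Hom
  id p := ⟨𝟙 p.fst, 𝟙 p.snd, by simp⟩
  comp v w := ⟨v.fst ≫ w.fst, v.snd ≫ w.snd, by
    simp [w.condition, reassoc_of% v.condition]⟩
  id_comp _ := Hom.ext (Category.id_comp _) (Category.id_comp _)
  comp_id _ := Hom.ext (Category.comp_id _) (Category.comp_id _)
  assoc _ _ _ := Hom.ext (Category.assoc _ _ _) (Category.assoc _ _ _)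

theorem sigma_hom_ext {p : StrictPullback F G} {S T : Σ q : StrictPullback F G, p ⟶ q}
    (h_fst : (⟨S.1.fst, S.2.fst⟩ : Σ a, p.fst ⟶ a) = ⟨T.1.fst, T.2.fst⟩)
    (h_snd : (⟨S.1.snd, S.2.snd⟩ : Σ b, p.snd ⟶ b) = ⟨T.1.snd, T.2.snd⟩) : S = T := by
  obtain ⟨⟨_, _, _⟩, ⟨_, _, _⟩⟩ := S
  obtain ⟨⟨_, _, _⟩, ⟨_, _, _⟩⟩ := T
  cases h_fst
  cases h_snd
  rfl

variable (F G)

/-- The first projection of the strict pullback. -/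
abbrev fstFunctor : StrictPullback F G ⥤ A where
  obj p := p.fst
  map v := Hom.fst v

/-- The symmetry of the strict pullback. -/
def swapFunctor : StrictPullback F G ⥤ StrictPullback G F where
  obj p := ⟨p.snd, p.fst, p.condition.symm⟩
  map v := ⟨Hom.snd v, Hom.fst v, by
    rw [comp_eqToHom_iff, Category.assoc, Hom.condition v]
    simp⟩

/-- The symmetry of the strict pullback, as an isomorphism of categories. -/
def swap : IsoCat (StrictPullback F G) (StrictPullback G F) where
  functor := swapFunctor F G
  inverse := swapFunctor G F
  unit_eq := rfl
  counit_eq := rfl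

end

end StrictPullback

namespace Lens

section Mono

variable {A B C : Type u} [SmallCategory A] [SmallCategory B] [SmallCategory C]

/-- The completion of a morphism `p.fst ⟶ a` to a morphism out of `p` in the strict pullback,
its second component being a lift along `g`. -/
def pullbackLift {F : A ⥤ C} {g : Lens B C} {p : StrictPullback F g.func} {a : A}
    (v : p.fst ⟶ a) : Σ q : StrictPullback F g.func, p ⟶ q :=
  ⟨⟨a, (g.liftOver p.condition.symm (F.map v)).1, (g.liftOver_cod _ _).symm⟩,
    ⟨v, (g.liftOver p.condition.symm (F.map v)).2, by simp [map_liftOver]⟩⟩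

theorem pullbackLift_comp {F : A ⥤ C} {g : Lens B C} {p : StrictPullback F g.func} {a a' : A}
    (v : p.fst ⟶ a) (w : a ⟶ a') :
    pullbackLift (v ≫ w) = ⟨(pullbackLift (p := (pullbackLift v).1) w).1,
      (pullbackLift v).2 ≫ (pullbackLift (p := (pullbackLift v).1) w).2⟩ :=
  StrictPullback.sigma_hom_ext rfl <|
    (congrArg (g.liftOver _) (F.map_comp v w)).trans (g.liftOver_comp _ _ _)

/-- The first projection of the strict pullback of a functor along a lens. -/
def pullbackFst (F : A ⥤ C) (g : Lens B C) : Lens (StrictPullback F g.func) A where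
  func := StrictPullback.fstFunctor F g.func
  lift _ _ v := pullbackLift v
  lift_cod _ _ _ := rfl
  lift_map _ _ _ := (Category.comp_id _).symm
  lift_id _ := StrictPullback.sigma_hom_ext rfl <|
    (congrArg (g.liftOver _) (F.map_id _)).trans (g.liftOver_id _)
  lift_comp p a a' v w :=
    (pullbackLift_comp v w).trans <| congrArg
      (fun k : a ⟶ a' => (⟨(pullbackLift (p := (pullbackLift v).1) k).1,
        (pullbackLift v).2 ≫ (pullbackLift (p := (pullbackLift v).1) k).2⟩ :
          Σ q : StrictPullback F g.func, p ⟶ q))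
      (Category.id_comp w).symm

/-- The second projection of the strict pullback of a functor along a lens. -/
def pullbackSnd (f : Lens A C) (G : B ⥤ C) : Lens (StrictPullback f.func G) B :=
  (ofIsoCat (StrictPullback.swap f.func G)).comp (pullbackFst G f)

theorem pullbackSnd_lift (f : Lens A C) (G : B ⥤ C) {p : StrictPullback f.func G} {b : B}
    (v : p.snd ⟶ b) :
    (pullbackSnd f G).lift v = ⟨⟨(f.liftOver p.condition (G.map v)).1, b, f.liftOver_cod _ _⟩,
      ⟨(f.liftOver p.condition (G.map v)).2, v, by simp [map_liftOver]⟩⟩ :=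
  Sigma.ext rfl (heq_of_eq (Category.id_comp _))

theorem pullback_condition (f : Lens A C) (g : Lens B C) :
    (pullbackFst f.func g).comp f = (pullbackSnd f g.func).comp g := by
  refine ext_of_func_eq (CategoryTheory.Functor.ext (fun p => p.condition) fun p q v => ?_)
    fun p c u => ?_
  · rw [← Category.assoc, ← comp_eqToHom_iff]
    exact StrictPullback.Hom.condition v
  · change pullbackLift (f.lift u).2 =
      (pullbackSnd f g.func).lift (g.liftOver p.condition.symm u).2
    rw [pullbackSnd_lift]
    exact StrictPullback.sigma_hom_ext (liftOver_map_liftOver p.condition u).symm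
      (liftOver_map_lift p.condition.symm u)

theorem IsMono.obj_injective {f : Lens A B} (hf : f.IsMono) :
    Function.Injective f.func.obj := fun a a' h =>
  Functor.congr_obj (congrArg Lens.func (hf _ _ (pullback_condition f f))) ⟨a, a', h⟩

theorem IsMono.faithful {f : Lens A B} (hf : f.IsMono) : f.func.Faithful where
  map_injective {a a'} v w h := by
    have h_proj : pullbackFst f.func f = pullbackSnd f f.func := hf _ _ (pullback_condition f f)
    let k : (⟨a, a, rfl⟩ : StrictPullback f.func f.func) ⟶ ⟨a', a', rfl⟩ := ⟨v, w, by simpa using h⟩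
    exact eq_of_heq (Functor.hcongr_hom (congrArg Lens.func h_proj) k)

end Mono

end Lens

section Elements

variable {B : Type*} [Category* B]

theorem elements_eqToHom_val {F : B ⥤ Type*} {x y : F.Elements} (h : x = y) :
    (eqToHom h).val = eqToHom (congrArg Sigma.fst h) :=
  eqToHom_map (CategoryOfElements.π F) h

theorem elements_comp_eqToHom_val {F : B ⥤ Type*} {x y z : F.Elements} (v : x ⟶ y) (h : y = z) :
    (v ≫ eqToHom h).val = v.val ≫ eqToHom (congrArg Sigma.fst h) :=
  congrArg (v.val ≫ ·) (elements_eqToHom_val h)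

theorem elements_eqToHom_comp_val {F : B ⥤ Type*} {x y z : F.Elements} (h : x = y) (v : y ⟶ z) :
    (eqToHom h ≫ v).val = eqToHom (congrArg Sigma.fst h) ≫ v.val :=
  congrArg (· ≫ v.val) (elements_eqToHom_val h)

/-- The section of the projection from a category of elements given by a global section. -/
def sectionFunctor {F : B ⥤ Type*} (s : F.sections) : B ⥤ F.Elements where
  obj b := F.elementsMk b (s.1 b)
  map v := ⟨v, s.2 v⟩

/-- The functor sending `b` to the subsets of `Hom(b, b₀)`, with morphisms acting by preimage along
precomposition. Its sections `b ↦ ∅` and `b ↦ Hom(b, b₀)` agree exactly at the objects without a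
morphism to `b₀`. -/
def homSets (b₀ : B) : B ⥤ Type _ where
  obj b := Set (b ⟶ b₀)
  map v := ↾fun S => (v ≫ ·) ⁻¹' S

end Elements

namespace Lens

section Epi

variable {A B : Type u} [SmallCategory A] [SmallCategory B]

/-- The lens given by a global section: a morphism out of a value of the section is lifted to the
morphism of `B` underlying it. -/
def ofSection {F : B ⥤ Type u} (s : F.sections) : Lens B F.Elements where
  func := sectionFunctor s
  lift _ x v := ⟨x.1, v.1⟩
  lift_cod _ _ v := Sigma.ext rfl (heq_of_eq ((s.2 v.1).symm.trans v.2))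
  lift_map _ _ v :=
    Subtype.ext ((elements_comp_eqToHom_val v _).trans (Category.comp_id _)).symm
  lift_id _ := rfl
  lift_comp b x y v w := by
    have h_val (h : (sectionFunctor s).obj x.1 = x) : (eqToHom h ≫ w).val = w.val :=
      (elements_eqToHom_comp_val h w).trans (Category.id_comp _)
    exact congrArg (fun k : x.1 ⟶ y.1 => (⟨y.1, v.1 ≫ k⟩ : Σ b' : B, b ⟶ b')) (h_val _).symm

theorem comp_ofSection_congr (f : Lens A B) {F : B ⥤ Type u} {s t : F.sections}
    (h : ∀ a, s.1 (f.func.obj a) = t.1 (f.func.obj a)) :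
    f.comp (ofSection s) = f.comp (ofSection t) := by
  have h_obj (a : A) : (f.comp (ofSection s)).func.obj a = (f.comp (ofSection t)).func.obj a :=
    Sigma.ext rfl (heq_of_eq (h a))
  have h_func : (f.comp (ofSection s)).func = (f.comp (ofSection t)).func := by
    refine CategoryTheory.Functor.ext h_obj fun a a' v => Subtype.ext ?_
    rw [elements_eqToHom_comp_val, elements_comp_eqToHom_val]
    exact ((Category.id_comp _).trans (Category.comp_id _)).symm
  refine ext_of_func_eq h_func fun a x v =>
    congrArg (fun u : f.func.obj a ⟶ x.1 => f.lift u) ?_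
  exact ((elements_eqToHom_comp_val (h_obj a).symm v).trans (Category.id_comp _)).symm

theorem IsEpi.section_ext {f : Lens A B} (hf : f.IsEpi) {F : B ⥤ Type u} {s t : F.sections}
    (h : ∀ a, s.1 (f.func.obj a) = t.1 (f.func.obj a)) : s = t := by
  refine Functor.sections_ext_iff.mpr fun b => ?_
  have h_incl := congrArg Lens.func (hf _ _ (f.comp_ofSection_congr h))
  exact eq_of_heq (Sigma.mk.inj (Functor.congr_obj h_incl b)).2

theorem IsEpi.obj_surjective {f : Lens A B} (hf : f.IsEpi) :
    Function.Surjective f.func.obj := by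
  intro b₀
  by_contra h_range
  have h_empty (a : A) : IsEmpty (f.func.obj a ⟶ b₀) := ⟨fun u => h_range ⟨_, f.lift_cod u⟩⟩
  let s : (homSets b₀).sections := ⟨fun _ => Set.univ, fun _ => rfl⟩
  let t : (homSets b₀).sections := ⟨fun b => (∅ : Set (b ⟶ b₀)), fun _ => rfl⟩
  have h_eq : s = t := hf.section_ext fun a => Set.univ_eq_empty_iff.mpr (h_empty a)
  have h_univ : (Set.univ : Set (b₀ ⟶ b₀)) = ∅ := Functor.sections_ext_iff.mp h_eq b₀
  exact h_univ.subset (Set.mem_univ (𝟙 b₀))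

end Epi

end Lens

/-- The category of small categories and lenses is balanced: a lens is an isomorphism if
and only if it is both a monomorphism and an epimorphism. -/
theorem lens_balanced {A B : Type u} [SmallCategory A] [SmallCategory B] (f : Lens A B) :
    (∃ g : Lens B A, f.comp g = Lens.id A ∧ g.comp f = Lens.id B) ↔
      (f.IsMono ∧ f.IsEpi) := by
  constructor
  · rintro ⟨g, hfg, hgf⟩
    exact ⟨Lens.isMono_of_comp_eq_id hfg, Lens.isEpi_of_comp_eq_id hgf⟩
  · rintro ⟨hm, he⟩
    have : f.func.IsIso :=
      { faithful := hm.faithful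
        full := Lens.full_of_obj_injective hm.obj_injective
        bijective_obj := ⟨hm.obj_injective, he.obj_surjective⟩ }
    exact f.exists_inverse_of_isIso_func
end
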